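/- Let (X_1,…,X_r) have the GEV_r density f_r with parameters μ ∈ ℝ, σ > 0, ξ ≠ 0. Then for every j with 1 ≤ j ≤ r, E[(1+ξ Z_j)^{−2/ξ}] = j(j+1); in particular this expectation is finite. -/

import Mathlib

open MeasureTheory ProbabilityTheory Real Filter Topology

/-- The joint density of the `r` largest order statistics limit (GEV_r) with
location `μ`, scale `σ`, and shape `ξ ≠ 0`.  The coordinates are in decreasing
order: `x 0` is `x_1` (the largest) and `x ⟨r-1,_⟩` is `x_r`. -/
noncomputable def gevrDensity (μ σ ξ : ℝ) (r : ℕ) (x : Fin r → ℝ) : ℝ :=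
  if h : 0 < r ∧ StrictAnti x ∧ (∀ j, 0 < 1 + ξ * ((x j - μ) / σ)) then
    (σ ^ r)⁻¹ * Real.exp
      (-(1 + ξ * ((x ⟨r - 1, Nat.sub_lt h.1 Nat.one_pos⟩ - μ) / σ)) ^ (-1 / ξ)
        - (1 / ξ + 1) * ∑ j, Real.log (1 + ξ * ((x j - μ) / σ)))
  else 0

/-- The GEV_r probability measure on `ℝ^r`, given by the density `gevrDensity`. -/
noncomputable def gevrMeasure (μ σ ξ : ℝ) (r : ℕ) : Measure (Fin r → ℝ) :=
  MeasureTheory.volume.withDensity fun x => ENNReal.ofReal (gevrDensity μ σ ξ r x)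

/-!
The map `t ↦ (1 + ξ (t - μ) / σ) ^ (-1 / ξ)` is decreasing, and applied to each coordinate it
carries the GEV_r law to the law of the first `r` arrival times of a unit-rate Poisson process,
which has density `exp (-y_r)` on `0 < y_1 < ⋯ < y_r`: the remaining factors of the GEV_r density
are the Jacobian. The `j`-th arrival time is Gamma distributed with shape `j`, so its second moment
is `Γ (j + 2) / Γ j = j (j + 1)`.
-/

section StrictMonoTuples

/-- The `n`-tuples of points of `s` listed in increasing order. For `s = Ioi 0` this is the state
space of the first `n` arrival times of a point process on the half-line. -/
def strictMonoTuples (n : ℕ) (s : Set ℝ) : Set (Fin n → ℝ) :=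
  {x | StrictMono x ∧ ∀ i, x i ∈ s}

theorem measurableSet_strictMonoTuples (n : ℕ) {s : Set ℝ} (hs : MeasurableSet s) :
    MeasurableSet (strictMonoTuples n s) := by
  simp only [strictMonoTuples, StrictMono, Set.ofPred_and, Set.ofPred_forall]
  refine .inter (.iInter fun i => .iInter fun j => .iInter fun _ => ?_) (.iInter fun i => ?_)
  · exact measurableSet_lt (measurable_pi_apply i) (measurable_pi_apply j)
  · exact measurable_pi_apply i hs

theorem strictMono_snoc_iff {α : Type*} [Preorder α] {n : ℕ} {x : Fin n → α} {t : α} :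
    StrictMono (Fin.snoc x t : Fin (n + 1) → α) ↔ StrictMono x ∧ ∀ i, x i < t := by
  simp [StrictMono, Fin.forall_fin_succ', Fin.castSucc_lt_last, Fin.not_lt.2 (Fin.le_last _),
    forall_and]

theorem snoc_mem_strictMonoTuples_iff {n : ℕ} {s : Set ℝ} {x : Fin n → ℝ} {t : ℝ} :
    (Fin.snoc x t : Fin (n + 1) → ℝ) ∈ strictMonoTuples (n + 1) s ↔
      x ∈ strictMonoTuples n (s ∩ Set.Iio t) ∧ t ∈ s := by
  simp only [strictMonoTuples, Set.mem_ofPred_eq, strictMono_snoc_iff, Fin.forall_fin_succ',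
    Fin.snoc_castSucc, Fin.snoc_last, Set.mem_inter_iff, Set.mem_Iio, forall_and]
  tauto

theorem snoc_mem_strictMonoTuples_iff_last_lt {n : ℕ} {s : Set ℝ} {x : Fin (n + 1) → ℝ} {t : ℝ} :
    (Fin.snoc x t : Fin (n + 2) → ℝ) ∈ strictMonoTuples (n + 2) s ↔
      x ∈ strictMonoTuples (n + 1) s ∧ t ∈ s ∩ Set.Ioi (x (Fin.last n)) := by
  have hlast (hx : StrictMono x) : (∀ i, x i < t) ↔ x (Fin.last n) < t :=
    ⟨fun h => h _, fun h i => (hx.monotone (Fin.le_last i)).trans_lt h⟩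
  rw [snoc_mem_strictMonoTuples_iff]
  simp only [strictMonoTuples, Set.mem_ofPred_eq, Set.mem_inter_iff, Set.mem_Iio, Set.mem_Ioi,
    forall_and]
  tauto

theorem measurePreserving_snoc (n : ℕ) :
    MeasurePreserving
      (fun p : ℝ × (Fin n → ℝ) => (Fin.snoc p.2 p.1 : Fin (n + 1) → ℝ)) := by
  simpa [MeasurableEquiv.piFinSuccAbove, Fin.insertNthEquiv, Fin.insertNth_last'] using
    (volume_preserving_piFinSuccAbove (fun _ : Fin (n + 1) => ℝ) (Fin.last n)).symm

theorem lintegral_eq_lintegral_lintegral_snoc {n : ℕ} {F : (Fin (n + 1) → ℝ) → ENNReal}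
    (hF : Measurable F) :
    ∫⁻ y, F y = ∫⁻ t : ℝ, ∫⁻ x : Fin n → ℝ, F (Fin.snoc x t) := by
  have hsnoc := measurePreserving_snoc n
  rw [← hsnoc.lintegral_comp hF]
  exact lintegral_prod _ (hF.comp hsnoc.measurable).aemeasurable

theorem lintegral_eq_lintegral_lintegral_snoc_symm {n : ℕ} {F : (Fin (n + 1) → ℝ) → ENNReal}
    (hF : Measurable F) :
    ∫⁻ y, F y = ∫⁻ x : Fin n → ℝ, ∫⁻ t : ℝ, F (Fin.snoc x t) := by
  have hsnoc := measurePreserving_snoc n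
  rw [← hsnoc.lintegral_comp hF]
  exact lintegral_prod_symm _ (hF.comp hsnoc.measurable).aemeasurable

theorem setLIntegral_strictMonoTuples_last {n : ℕ} {s : Set ℝ} (hs : MeasurableSet s)
    {h : ℝ → ENNReal} (hh : Measurable h) :
    ∫⁻ y in strictMonoTuples (n + 1) s, h (y (Fin.last n)) =
      ∫⁻ t in s, volume (strictMonoTuples n (s ∩ Set.Iio t)) * h t := by
  have hmeas := measurableSet_strictMonoTuples (n + 1) hs
  rw [← lintegral_indicator hmeas, ← lintegral_indicator hs,
    lintegral_eq_lintegral_lintegral_snoc (.indicator (by fun_prop) hmeas)]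
  refine lintegral_congr fun t => ?_
  by_cases ht : t ∈ s
  · rw [Set.indicator_of_mem ht, mul_comm, ← lintegral_indicator_const
      (measurableSet_strictMonoTuples n (hs.inter measurableSet_Iio))]
    refine lintegral_congr fun x => ?_
    by_cases hx : x ∈ strictMonoTuples n (s ∩ Set.Iio t) <;>
      simp [Set.indicator, snoc_mem_strictMonoTuples_iff, hx, ht]
  · simp [Set.indicator, snoc_mem_strictMonoTuples_iff, ht]

theorem setLIntegral_strictMonoTuples_snoc {n : ℕ} {s : Set ℝ} (hs : MeasurableSet s)
    {F : (Fin (n + 2) → ℝ) → ENNReal} (hF : Measurable F) :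
    ∫⁻ y in strictMonoTuples (n + 2) s, F y =
      ∫⁻ x in strictMonoTuples (n + 1) s, ∫⁻ t in s ∩ Set.Ioi (x (Fin.last n)),
        F (Fin.snoc x t) := by
  have hmeas (m : ℕ) := measurableSet_strictMonoTuples m hs
  rw [← lintegral_indicator (hmeas _), ← lintegral_indicator (hmeas _),
    lintegral_eq_lintegral_lintegral_snoc_symm (hF.indicator (hmeas _))]
  refine lintegral_congr fun x => ?_
  by_cases hx : x ∈ strictMonoTuples (n + 1) s
  · rw [Set.indicator_of_mem hx, ← lintegral_indicator (hs.inter measurableSet_Ioi)]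
    refine lintegral_congr fun t => ?_
    by_cases ht : t ∈ s ∩ Set.Ioi (x (Fin.last n)) <;>
      simp only [Set.indicator, snoc_mem_strictMonoTuples_iff_last_lt, hx, ht, and_self,
        and_false, if_true, if_false]
  · simp [Set.indicator, snoc_mem_strictMonoTuples_iff_last_lt, hx]

theorem volume_strictMonoTuples_Ioo (n : ℕ) {a b : ℝ} (hab : a ≤ b) :
    volume (strictMonoTuples n (Set.Ioo a b)) = ENNReal.ofReal ((b - a) ^ n / n.factorial) := by
  induction n generalizing b with
  | zero =>
    have : strictMonoTuples 0 (Set.Ioo a b) = Set.univ := by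
      ext x; simp [strictMonoTuples, StrictMono]
    simp [this, volume_pi]
  | succ n ih =>
    have hslice : ∀ t ∈ Set.Ioo a b,
        volume (strictMonoTuples n (Set.Ioo a b ∩ Set.Iio t)) * 1 =
          ENNReal.ofReal ((t - a) ^ n / n.factorial) := fun t ht => by
      rw [Set.Ioo_inter_Iio, min_eq_right ht.2.le, mul_one, ih ht.1.le]
    have hint : IntegrableOn (fun t => (t - a) ^ n / n.factorial) (Set.Ioo a b) :=
      (Continuous.integrableOn_Icc (by fun_prop)).mono_set Set.Ioo_subset_Icc_self
    have hnonneg : ∀ᵐ t ∂volume.restrict (Set.Ioo a b), 0 ≤ (t - a) ^ n / n.factorial :=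
      ae_restrict_of_forall_mem measurableSet_Ioo fun t ht =>
        div_nonneg (pow_nonneg (sub_nonneg.2 ht.1.le) _) (Nat.cast_nonneg _)
    have hvol := setLIntegral_strictMonoTuples_last (n := n) (measurableSet_Ioo (a := a) (b := b))
      (measurable_const (a := (1 : ENNReal)))
    rw [setLIntegral_one, setLIntegral_congr_fun measurableSet_Ioo hslice,
      ← ofReal_integral_eq_lintegral_ofReal hint hnonneg, ← integral_Ioc_eq_integral_Ioo,
      ← intervalIntegral.integral_of_le hab] at hvol
    rw [hvol, intervalIntegral.integral_div,
      intervalIntegral.integral_comp_sub_right (fun t => t ^ n) a, integral_pow,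
      Nat.factorial_succ]
    push_cast
    congr 1
    field_simp
    simp

end StrictMonoTuples

section GammaMeasure

theorem gammaMeasure_eq_withDensity_restrict_Ioi (a r : ℝ) :
    gammaMeasure a r = (volume.restrict (Set.Ioi 0)).withDensity fun t =>
      ENNReal.ofReal (r ^ a / Gamma a * t ^ (a - 1) * exp (-(r * t))) := by
  rw [restrict_Ioi_eq_restrict_Ici, ← withDensity_indicator measurableSet_Ici, gammaMeasure]
  congr 1
  ext t
  by_cases ht : 0 ≤ t <;> simp [gammaPDF_eq, Set.indicator, ht]

theorem integral_rpow_gammaMeasure {a r s : ℝ} (ha : 0 < a) (hr : 0 < r) (has : 0 < a + s) :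
    ∫ t, t ^ s ∂gammaMeasure a r = Gamma (a + s) / (Gamma a * r ^ s) := by
  have hdensity : ∀ t ∈ Set.Ioi (0 : ℝ),
      (ENNReal.ofReal (r ^ a / Gamma a * t ^ (a - 1) * exp (-(r * t)))).toReal • t ^ s =
        r ^ a / Gamma a * (t ^ (a + s - 1) * exp (-(r * t))) := fun t (ht : 0 < t) => by
    rw [ENNReal.toReal_ofReal (by positivity), smul_eq_mul, add_sub_right_comm, rpow_add ht]
    ring
  rw [gammaMeasure_eq_withDensity_restrict_Ioi, integral_withDensity_eq_integral_toReal_smul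
      (by fun_prop) (ae_of_all _ fun _ => ENNReal.ofReal_lt_top),
    setIntegral_congr_fun measurableSet_Ioi hdensity, integral_const_mul,
    integral_rpow_mul_exp_neg_mul_Ioi has hr, one_div, inv_rpow hr.le, rpow_add hr]
  field_simp

theorem integrable_rpow_gammaMeasure {a r s : ℝ} (ha : 0 < a) (hr : 0 < r) (has : 0 < a + s) :
    Integrable (fun t => t ^ s) (gammaMeasure a r) := by
  refine .of_integral_ne_zero ?_
  rw [integral_rpow_gammaMeasure ha hr has]
  positivity

end GammaMeasure

section PoissonArrivals

/-- The joint law of the first `n + 1` arrival times of a unit-rate Poisson process: it has density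
`exp (-y_{n+1})` on the increasing tuples of positive reals. -/
noncomputable def poissonArrivalMeasure (n : ℕ) : Measure (Fin (n + 1) → ℝ) :=
  (volume.restrict (strictMonoTuples (n + 1) (Set.Ioi 0))).withDensity fun y =>
    ENNReal.ofReal (exp (-y (Fin.last n)))

theorem lintegral_poissonArrivalMeasure {n : ℕ} {F : (Fin (n + 1) → ℝ) → ENNReal}
    (hF : Measurable F) :
    ∫⁻ y, F y ∂poissonArrivalMeasure n =
      ∫⁻ y in strictMonoTuples (n + 1) (Set.Ioi 0),
        ENNReal.ofReal (exp (-y (Fin.last n))) * F y :=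
  lintegral_withDensity_eq_lintegral_mul _ (by fun_prop) hF

theorem lintegral_Ioi_exp_neg (s : ℝ) :
    ∫⁻ t in Set.Ioi s, ENNReal.ofReal (exp (-t)) = ENNReal.ofReal (exp (-s)) := by
  rw [← ofReal_integral_eq_lintegral_ofReal (integrableOn_exp_neg_Ioi s)
    (ae_of_all _ fun _ => (exp_pos _).le), integral_exp_neg_Ioi]

theorem measurePreserving_init_poissonArrivalMeasure (n : ℕ) :
    MeasurePreserving (Fin.init : (Fin (n + 2) → ℝ) → Fin (n + 1) → ℝ)
      (poissonArrivalMeasure (n + 1)) (poissonArrivalMeasure n) := by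
  have hinit : Measurable (Fin.init : (Fin (n + 2) → ℝ) → Fin (n + 1) → ℝ) := by
    unfold Fin.init
    fun_prop
  refine ⟨hinit, Measure.ext_of_lintegral _ fun F hF => ?_⟩
  rw [lintegral_map hF hinit,
    lintegral_poissonArrivalMeasure (F := fun y => F (Fin.init y)) (hF.comp hinit),
    lintegral_poissonArrivalMeasure hF,
    setLIntegral_strictMonoTuples_snoc measurableSet_Ioi (by fun_prop)]
  refine setLIntegral_congr_fun (measurableSet_strictMonoTuples _ measurableSet_Ioi) fun x hx => ?_
  simp only [Fin.snoc_last, Fin.init_snoc]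
  rw [Set.inter_eq_right.2 (Set.Ioi_subset_Ioi (hx.2 (Fin.last n)).le),
    lintegral_mul_const _ (by fun_prop), lintegral_Ioi_exp_neg]

theorem measurePreserving_last_poissonArrivalMeasure (n : ℕ) :
    MeasurePreserving (fun y : Fin (n + 1) → ℝ => y (Fin.last n))
      (poissonArrivalMeasure n) (gammaMeasure (n + 1) 1) := by
  refine ⟨measurable_pi_apply _, Measure.ext_of_lintegral _ fun f hf => ?_⟩
  rw [lintegral_map hf (measurable_pi_apply _),
    lintegral_poissonArrivalMeasure (F := fun y => f (y (Fin.last n))) (by fun_prop),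
    gammaMeasure_eq_withDensity_restrict_Ioi,
    lintegral_withDensity_eq_lintegral_mul _ (by fun_prop) hf,
    setLIntegral_strictMonoTuples_last (h := fun t => ENNReal.ofReal (exp (-t)) * f t)
      measurableSet_Ioi (by fun_prop)]
  refine setLIntegral_congr_fun measurableSet_Ioi fun t (ht : 0 < t) => ?_
  have hdensity : 1 ^ ((n : ℝ) + 1) / Gamma (n + 1) * t ^ ((n : ℝ) + 1 - 1) * exp (-(1 * t)) =
      t ^ n / n.factorial * exp (-t) := by
    rw [one_rpow, Gamma_nat_eq_factorial, add_sub_cancel_right, rpow_natCast, one_mul]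
    ring
  simp only [Pi.mul_apply]
  rw [hdensity, ENNReal.ofReal_mul (by positivity), Set.Ioi_inter_Iio,
    volume_strictMonoTuples_Ioo n ht.le, sub_zero, mul_assoc]

theorem measurePreserving_eval_poissonArrivalMeasure {n : ℕ} (i : Fin (n + 1)) :
    MeasurePreserving (fun y : Fin (n + 1) → ℝ => y i)
      (poissonArrivalMeasure n) (gammaMeasure (i + 1) 1) := by
  induction n with
  | zero =>
    obtain rfl : i = Fin.last 0 := Fin.fin_one_eq_zero i
    exact measurePreserving_last_poissonArrivalMeasure 0
  | succ n ih =>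
    induction i using Fin.lastCases with
    | last => exact measurePreserving_last_poissonArrivalMeasure (n + 1)
    | cast i => exact (ih i).comp (measurePreserving_init_poissonArrivalMeasure n)

end PoissonArrivals

section CoordinatewiseMaps

theorem lintegral_image_piMap_eq_lintegral_prod_abs_deriv_mul {ι : Type*} [Fintype ι]
    {g g' : ι → ℝ → ℝ} {D : Set (ι → ℝ)} (hD : MeasurableSet D)
    (hg : ∀ x ∈ D, ∀ i, HasDerivAt (g i) (g' i (x i)) (x i)) (hinj : Set.InjOn (Pi.map g) D)
    (F : (ι → ℝ) → ENNReal) :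
    ∫⁻ y in Pi.map g '' D, F y =
      ∫⁻ x in D, ENNReal.ofReal (∏ i, |g' i (x i)|) * F (Pi.map g x) := by
  have hderiv : ∀ x ∈ D, HasFDerivWithinAt (Pi.map g) (ContinuousLinearMap.pi fun i =>
      (ContinuousLinearMap.toSpanSingleton ℝ (g' i (x i))).comp
        (ContinuousLinearMap.proj (R := ℝ) (φ := fun _ : ι => ℝ) i)) D x := fun x hx =>
    (hasFDerivAt_pi.2 fun i =>
      (hg x hx i).hasFDerivAt.comp x (hasFDerivAt_apply i x)).hasFDerivWithinAt
  rw [lintegral_image_eq_lintegral_abs_det_fderiv_mul volume hD hderiv hinj]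
  simp only [ContinuousLinearMap.det_pi, ContinuousLinearMap.det_toSpanSingleton, Finset.abs_prod]

theorem image_piMap_strictAnti {α : Type*} [LinearOrder α] {n : ℕ} {g : α → ℝ} {s : Set α}
    (hg : StrictAntiOn g s) :
    Pi.map (fun _ => g) '' {x : Fin n → α | StrictAnti x ∧ ∀ i, x i ∈ s} =
      strictMonoTuples n (g '' s) := by
  ext y
  constructor
  · rintro ⟨x, ⟨hx, hxs⟩, rfl⟩
    exact ⟨fun i j hij => hg (hxs j) (hxs i) (hx hij), fun i => Set.mem_image_of_mem g (hxs i)⟩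
  · rintro ⟨hy, hys⟩
    choose x hxs hxy using hys
    obtain rfl : Pi.map (fun _ => g) x = y := funext hxy
    exact ⟨x, ⟨fun i j hij => (hg.lt_iff_gt (hxs i) (hxs j)).1 (hy hij), hxs⟩, rfl⟩

end CoordinatewiseMaps

section GEV

variable {μ σ ξ : ℝ}

/-- The support `{t | 0 < 1 + ξ (t - μ) / σ}` of the one-dimensional GEV distribution. -/
def gevSupport (μ σ ξ : ℝ) : Set ℝ :=
  {t | 0 < 1 + ξ * ((t - μ) / σ)}

/-- The function `t ↦ (1 + ξ (t - μ) / σ) ^ (-1 / ξ)`, minus the logarithm of the GEV distribution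
function. Meaningful on `gevSupport μ σ ξ` only. -/
noncomputable def gevTail (μ σ ξ t : ℝ) : ℝ :=
  (1 + ξ * ((t - μ) / σ)) ^ (-1 / ξ)

/-- The intensity `t ↦ σ⁻¹ (1 + ξ (t - μ) / σ) ^ (-1 / ξ - 1)` of the Poisson process of which the
GEV_r distribution describes the `r` largest points. Meaningful on `gevSupport μ σ ξ` only. -/
noncomputable def gevIntensity (μ σ ξ t : ℝ) : ℝ :=
  σ⁻¹ * (1 + ξ * ((t - μ) / σ)) ^ (-1 / ξ - 1)

/-- The region `D_r` of decreasing tuples on which the GEV_r density is positive. -/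
def gevrSupport (μ σ ξ : ℝ) (r : ℕ) : Set (Fin r → ℝ) :=
  {x | StrictAnti x ∧ ∀ i, x i ∈ gevSupport μ σ ξ}

@[fun_prop]
theorem measurable_gevTail : Measurable (gevTail μ σ ξ) := by
  unfold gevTail
  fun_prop

@[fun_prop]
theorem measurable_gevIntensity : Measurable (gevIntensity μ σ ξ) := by
  unfold gevIntensity
  fun_prop

theorem measurableSet_gevrSupport (r : ℕ) : MeasurableSet (gevrSupport μ σ ξ r) := by
  simp only [gevrSupport, gevSupport, StrictAnti, Set.ofPred_and, Set.ofPred_forall,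
    Set.mem_ofPred_eq]
  refine .inter (.iInter fun i => .iInter fun j => .iInter fun _ => ?_) (.iInter fun i => ?_)
  · exact measurableSet_lt (measurable_pi_apply j) (measurable_pi_apply i)
  · exact measurableSet_lt measurable_const (by fun_prop)

theorem hasDerivAt_gevTail (hξ : ξ ≠ 0) {t : ℝ} (ht : t ∈ gevSupport μ σ ξ) :
    HasDerivAt (gevTail μ σ ξ) (-gevIntensity μ σ ξ t) t := by
  have hbase : HasDerivAt (fun t => 1 + ξ * ((t - μ) / σ)) (ξ * (1 / σ)) t :=
    ((((hasDerivAt_id t).sub_const μ).div_const σ).const_mul ξ).const_add 1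
  refine (hbase.rpow_const (p := -1 / ξ) (Or.inl ht.ne')).congr_deriv ?_
  rw [gevIntensity, show ξ * (1 / σ) * (-1 / ξ) = -σ⁻¹ by rw [one_div]; field_simp, neg_mul]

theorem strictAntiOn_gevTail (hσ : 0 < σ) (hξ : ξ ≠ 0) :
    StrictAntiOn (gevTail μ σ ξ) (gevSupport μ σ ξ) := by
  intro s hs t ht hst
  have hz : (s - μ) / σ < (t - μ) / σ := by gcongr
  rcases lt_or_gt_of_ne hξ with hneg | hpos
  · refine rpow_lt_rpow (le_of_lt ht) ?_ (div_pos_of_neg_of_neg (by norm_num) hneg)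
    gcongr 1 + ?_
    exact mul_lt_mul_of_neg_left hz hneg
  · refine rpow_lt_rpow_of_neg hs ?_ (div_neg_of_neg_of_pos (by norm_num) hpos)
    gcongr

theorem image_gevTail_gevSupport (hσ : σ ≠ 0) (hξ : ξ ≠ 0) :
    gevTail μ σ ξ '' gevSupport μ σ ξ = Set.Ioi 0 := by
  ext u
  constructor
  · rintro ⟨t, ht, rfl⟩
    exact rpow_pos_of_pos ht _
  · intro (hu : 0 < u)
    have hbase : 1 + ξ * ((μ + σ * ((u ^ (-ξ) - 1) / ξ) - μ) / σ) = u ^ (-ξ) := by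
      field_simp
      ring
    refine ⟨μ + σ * ((u ^ (-ξ) - 1) / ξ), ?_, ?_⟩
    · rw [gevSupport, Set.mem_ofPred_eq, hbase]
      positivity
    · rw [gevTail, hbase, ← rpow_mul hu.le, show -ξ * (-1 / ξ) = 1 by field_simp, rpow_one]

theorem gevrDensity_of_notMem {r : ℕ} {x : Fin r → ℝ} (hx : x ∉ gevrSupport μ σ ξ r) :
    gevrDensity μ σ ξ r x = 0 :=
  dif_neg fun h => hx h.2

theorem gevrDensity_eq_prod_mul_exp {n : ℕ} {x : Fin (n + 1) → ℝ}
    (hx : x ∈ gevrSupport μ σ ξ (n + 1)) :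
    gevrDensity μ σ ξ (n + 1) x =
      (∏ i, gevIntensity μ σ ξ (x i)) * exp (-gevTail μ σ ξ (x (Fin.last n))) := by
  have hprod : exp (-((1 / ξ + 1) * ∑ i, log (1 + ξ * ((x i - μ) / σ)))) =
      ∏ i, (1 + ξ * ((x i - μ) / σ)) ^ (-1 / ξ - 1) := by
    rw [Finset.mul_sum, ← Finset.sum_neg_distrib, exp_sum]
    refine Finset.prod_congr rfl fun i _ => ?_
    rw [rpow_def_of_pos (hx.2 i)]
    ring_nf
  simp only [gevIntensity]
  rw [gevrDensity, dif_pos ⟨n.succ_pos, hx⟩, sub_eq_add_neg, exp_add, hprod,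
    Finset.prod_mul_distrib, Finset.prod_const, Finset.card_univ, Fintype.card_fin, inv_pow,
    mul_comm (exp _), ← mul_assoc]
  rfl

theorem gevrMeasure_eq_withDensity_restrict (hσ : 0 ≤ σ) (n : ℕ) :
    gevrMeasure μ σ ξ (n + 1) =
      (volume.restrict (gevrSupport μ σ ξ (n + 1))).withDensity fun x =>
        ENNReal.ofReal (∏ i, |-gevIntensity μ σ ξ (x i)|) *
          ENNReal.ofReal (exp (-gevTail μ σ ξ (x (Fin.last n)))) := by
  rw [← withDensity_indicator (measurableSet_gevrSupport _), gevrMeasure]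
  congr 1
  ext x
  by_cases hx : x ∈ gevrSupport μ σ ξ (n + 1)
  · have hnonneg (i) : 0 ≤ gevIntensity μ σ ξ (x i) :=
      mul_nonneg (inv_nonneg.2 hσ) (rpow_nonneg (le_of_lt (hx.2 i)) _)
    simp only [Set.indicator_of_mem hx, gevrDensity_eq_prod_mul_exp hx, abs_neg,
      abs_of_nonneg (hnonneg _)]
    exact ENNReal.ofReal_mul (Finset.prod_nonneg fun i _ => hnonneg i)
  · rw [Set.indicator_of_notMem hx, gevrDensity_of_notMem hx, ENNReal.ofReal_zero]

theorem measurePreserving_gevTail_gevrMeasure (hσ : 0 < σ) (hξ : ξ ≠ 0) (n : ℕ) :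
    MeasurePreserving (Pi.map fun _ => gevTail μ σ ξ)
      (gevrMeasure μ σ ξ (n + 1)) (poissonArrivalMeasure n) := by
  have hT : Measurable (Pi.map fun _ : Fin (n + 1) => gevTail μ σ ξ) :=
    measurable_pi_lambda _ fun i => measurable_gevTail.comp (measurable_pi_apply i)
  have hanti := strictAntiOn_gevTail (μ := μ) hσ hξ
  have hinj : Set.InjOn (Pi.map fun _ => gevTail μ σ ξ) (gevrSupport μ σ ξ (n + 1)) :=
    fun x hx y hy hxy => funext fun i => hanti.injOn (hx.2 i) (hy.2 i) (congrFun hxy i)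
  have himage : Pi.map (fun _ => gevTail μ σ ξ) '' gevrSupport μ σ ξ (n + 1) =
      strictMonoTuples (n + 1) (Set.Ioi 0) := by
    rw [gevrSupport, image_piMap_strictAnti hanti, image_gevTail_gevSupport hσ.ne' hξ]
  refine ⟨hT, Measure.ext_of_lintegral _ fun F hF => ?_⟩
  rw [lintegral_map hF hT, lintegral_poissonArrivalMeasure hF, ← himage,
    lintegral_image_piMap_eq_lintegral_prod_abs_deriv_mul (measurableSet_gevrSupport _)
      (g' := fun _ t => -gevIntensity μ σ ξ t) (fun x hx i => hasDerivAt_gevTail hξ (hx.2 i)) hinj,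
    gevrMeasure_eq_withDensity_restrict hσ.le,
    lintegral_withDensity_eq_lintegral_mul _ (by fun_prop)
      (g := fun x => F (Pi.map (fun _ => gevTail μ σ ξ) x)) (hF.comp hT)]
  simp only [Pi.mul_apply, mul_assoc, Pi.map_apply]

theorem hasLaw_gevTail_gevrMeasure (hσ : 0 < σ) (hξ : ξ ≠ 0) {r : ℕ} (i : Fin r) :
    HasLaw (fun x => gevTail μ σ ξ (x i)) (gammaMeasure (i + 1) 1) (gevrMeasure μ σ ξ r) := by
  obtain ⟨n, rfl⟩ := Nat.exists_eq_add_one_of_ne_zero i.pos.ne'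
  exact ((measurePreserving_eval_poissonArrivalMeasure i).comp
    (measurePreserving_gevTail_gevrMeasure hσ hξ n)).hasLaw

theorem ae_mem_gevrSupport (μ σ ξ : ℝ) (r : ℕ) :
    ∀ᵐ x ∂gevrMeasure μ σ ξ r, x ∈ gevrSupport μ σ ξ r := by
  have hmeas : MeasurableSet (gevrSupport μ σ ξ r)ᶜ := (measurableSet_gevrSupport r).compl
  have hzero : ∀ x ∈ (gevrSupport μ σ ξ r)ᶜ, ENNReal.ofReal (gevrDensity μ σ ξ r x) = 0 :=
    fun x hx => by rw [gevrDensity_of_notMem hx, ENNReal.ofReal_zero]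
  change gevrMeasure μ σ ξ r (gevrSupport μ σ ξ r)ᶜ = 0
  rw [gevrMeasure, withDensity_apply _ hmeas, setLIntegral_congr_fun hmeas hzero, lintegral_zero]

theorem gevTail_rpow {t : ℝ} (ht : t ∈ gevSupport μ σ ξ) (s : ℝ) :
    gevTail μ σ ξ t ^ s = (1 + ξ * ((t - μ) / σ)) ^ (-s / ξ) := by
  rw [gevTail, ← rpow_mul (le_of_lt ht), div_mul_eq_mul_div, neg_one_mul]

end GEV

/-- under the GEV_r distribution, `E[(1+ξZ_j)^{−2/ξ}] = j(j+1)`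
for every `1 ≤ j ≤ r`; in particular the expectation is finite. -/
theorem gevr_second_moment_exp_transform
    (μ σ ξ : ℝ) (hσ : 0 < σ) (hξ : ξ ≠ 0) (r : ℕ) (hr : 1 ≤ r)
    (j : ℕ) (hj1 : 1 ≤ j) (hjr : j ≤ r) :
    MeasureTheory.Integrable
      (fun x : Fin r → ℝ =>
        (1 + ξ * ((x ⟨j - 1, by omega⟩ - μ) / σ)) ^ (-2 / ξ))
      (gevrMeasure μ σ ξ r) ∧
    ∫ x : Fin r → ℝ,
        (1 + ξ * ((x ⟨j - 1, by omega⟩ - μ) / σ)) ^ (-2 / ξ)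
        ∂(gevrMeasure μ σ ξ r)
      = (j : ℝ) * ((j : ℝ) + 1) := by
  set i : Fin r := ⟨j - 1, by omega⟩
  have hj : ((i : ℕ) : ℝ) + 1 = j := by exact_mod_cast Nat.sub_add_cancel hj1
  have hlaw : HasLaw (fun x => gevTail μ σ ξ (x i)) (gammaMeasure j 1) (gevrMeasure μ σ ξ r) :=
    hj ▸ hasLaw_gevTail_gevrMeasure hσ hξ i
  have hj0 : (0 : ℝ) < j := by exact_mod_cast hj1
  have hsq : (fun x : Fin r → ℝ => (1 + ξ * ((x i - μ) / σ)) ^ (-2 / ξ)) =ᵐ[gevrMeasure μ σ ξ r]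
      (fun t => t ^ (2 : ℝ)) ∘ fun x => gevTail μ σ ξ (x i) :=
    (ae_mem_gevrSupport μ σ ξ r).mono fun x hx => (gevTail_rpow (hx.2 i) 2).symm
  have hint : Integrable (fun t => t ^ (2 : ℝ)) (gammaMeasure j 1) :=
    integrable_rpow_gammaMeasure hj0 one_pos (by positivity)
  have hGamma : Gamma ((j : ℝ) + 2) = (j + 1) * (j * Gamma j) := by
    rw [← Gamma_add_one hj0.ne', ← Gamma_add_one (by positivity), add_assoc, one_add_one_eq_two]
  rw [integrable_congr hsq, integral_congr_ae hsq, hlaw.integral_comp hint.aestronglyMeasurable,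
    integral_rpow_gammaMeasure hj0 one_pos (by positivity), hGamma, one_rpow]
  refine ⟨(hlaw.map_eq ▸ hint).comp_aemeasurable hlaw.aemeasurable, ?_⟩
  field_simp
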